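/- arXiv:2006.07670 — 2 statements merged into one kernel-verified Lean document; each statement's English description precedes it below -/
import Mathlib

section
/- Pathwise uniqueness holds for the labeled nonlinear system: if θ and θ' are both solutions of the nonlinear system for the labeled graphon W with the same initial datum θ₀ and the same driving processes B, then for almost every x ∈ I, P-almost surely θ^x_t = θ'^x_t for all t ∈ [0,T]. -/
open MeasureTheory ProbabilityTheory Real Set Filter Topology

noncomputable section

/-- The one-dimensional torus `𝕋 = ℝ/(2πℤ)`. -/
abbrev Torus : Type := AddCircle (2 * Real.pi)

instance : Fact (0 < 2 * Real.pi) := ⟨by positivity⟩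

/-- The label space `I = [0,1]`. -/
abbrev I01 : Set ℝ := Set.Icc (0:ℝ) 1

/-- The law at time `s` of the process `θ` under `P`. -/
def pathLaw {Ω : Type*} [MeasurableSpace Ω] (P : Measure Ω) (θ : Ω → ℝ → Torus) (s : ℝ) :
    Measure Torus := P.map (fun ω => θ ω s)

/-- The integrated drift
`∫₀ᵗ F(p_s) ds + ∫₀ᵗ ∫_I W(x,y) ( ∫_𝕋 Γ(p_s, u) μ^y_s(du) ) dy ds`. -/
def drift (F : Torus → ℝ) (Γ : Torus → Torus → ℝ) (W : ℝ → ℝ → ℝ)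
    (μ : ℝ → ℝ → Measure Torus) (x : ℝ) (p : ℝ → Torus) (t : ℝ) : ℝ :=
  (∫ s in Set.Icc 0 t, F (p s)) +
  ∫ s in Set.Icc 0 t, ∫ y in I01, W x y * ∫ u, Γ (p s) u ∂(μ y s)

/-- `θ : I × Ω → C([0,T],𝕋)` (jointly measurable, continuous in time) is a solution of the
labeled nonlinear system for the labeled graphon `W` with initial datum `θ0` and driving
processes `B`: writing `μ^y_s` for the law of `θ^y_s`, for a.e. `x ∈ I`, `P`-a.s., for all
`t ∈ [0,T]`,
`θ^x_t = θ^x_0 + π( ∫₀ᵗ F(θ^x_s) ds + ∫₀ᵗ ∫_I W(x,y) (∫_𝕋 Γ(θ^x_s,u) μ^y_s(du)) dy ds + B^x_t )`. -/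
structure IsLabeledSolution {Ω : Type*} [MeasurableSpace Ω] (T : ℝ) (P : Measure Ω)
    (F : Torus → ℝ) (Γ : Torus → Torus → ℝ) (W : ℝ → ℝ → ℝ)
    (θ0 : ℝ → Ω → Torus) (B : ℝ → Ω → ℝ → ℝ) (θ : ℝ → Ω → ℝ → Torus) : Prop where
  jointMeas : Measurable (fun p : ℝ × Ω => θ p.1 p.2)
  cont : ∀ x ω, ContinuousOn (θ x ω) (Set.Icc 0 T)
  sde : ∀ᵐ x ∂(volume.restrict I01), ∀ᵐ ω ∂P, ∀ t ∈ Set.Icc (0:ℝ) T,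
    θ x ω t = θ0 x ω +
      ((drift F Γ W (fun y s => pathLaw P (θ y) s) x (θ x ω) t + B x ω t : ℝ) : Torus)

/-- `F` is bounded and Lipschitz. -/
def BddLip (F : Torus → ℝ) : Prop :=
  (∃ K : NNReal, LipschitzWith K F) ∧ ∃ M : ℝ, ∀ a, |F a| ≤ M

/-- `Γ` is bounded and Lipschitz (jointly on `𝕋 × 𝕋`). -/
def BddLip2 (Γ : Torus → Torus → ℝ) : Prop :=
  (∃ K : NNReal, LipschitzWith K (fun p : Torus × Torus => Γ p.1 p.2)) ∧
    ∃ M : ℝ, ∀ a b, |Γ a b| ≤ M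

/-- A labeled graphon: a symmetric measurable function `I² → [0,1]`. -/
def IsGraphon (W : ℝ → ℝ → ℝ) : Prop :=
  Measurable (fun p : ℝ × ℝ => W p.1 p.2) ∧ (∀ x y, W x y ∈ Set.Icc (0:ℝ) 1) ∧
    ∀ x y, W x y = W y x

lemma gronwall_zero (f : ℝ → ℝ) (T C M : ℝ) (hC : 0 ≤ C)
    (h0 : ∀ s, 0 ≤ f s) (hM : ∀ s, f s ≤ M)
    (h : ∀ t ∈ Set.Icc (0:ℝ) T, f t ≤ C * ∫ s in Set.Icc 0 t, f s) :
    ∀ t ∈ Set.Icc (0:ℝ) T, f t = 0 := by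
  have hM0 : 0 ≤ M := (h0 0).trans (hM 0)
  have key : ∀ n : ℕ, ∀ t ∈ Set.Icc (0:ℝ) T, f t ≤ M * ((C * t) ^ n / n.factorial) := by
    intro n
    induction n with
    | zero => intro t _; simpa using hM t
    | succ n ih =>
      intro t ht
      refine (h t ht).trans ?_
      have hint : IntegrableOn (fun s : ℝ => M * ((C * s) ^ n / n.factorial)) (Set.Icc 0 t) :=
        (by fun_prop : Continuous (fun s : ℝ => M * ((C * s) ^ n / n.factorial))).continuousOn.integrableOn_Icc
      have h1 : ∫ s in Set.Icc 0 t, f s ≤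
          ∫ s in Set.Icc 0 t, M * ((C * s) ^ n / n.factorial) := by
        refine integral_mono_of_nonneg (Eventually.of_forall h0) hint ?_
        refine (ae_restrict_iff' measurableSet_Icc).2 (Eventually.of_forall fun s hs => ?_)
        exact ih s ⟨hs.1, hs.2.trans ht.2⟩
      have h2 : ∫ s in Set.Icc 0 t, M * ((C * s) ^ n / n.factorial) =
          M * (C ^ n * (t ^ (n+1) / (n+1)) / n.factorial) := by
        rw [integral_Icc_eq_integral_Ioc, ← intervalIntegral.integral_of_le ht.1]
        simp only [mul_pow, mul_div_assoc]
        simp [integral_pow]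
      rw [h2] at h1
      refine (mul_le_mul_of_nonneg_left h1 hC).trans (le_of_eq ?_)
      rw [Nat.factorial_succ]
      push_cast
      rw [mul_pow, pow_succ C]
      field_simp
  intro t ht
  refine le_antisymm ?_ (h0 t)
  have ht' : Tendsto (fun n : ℕ => M * ((C * t) ^ n / n.factorial)) atTop (𝓝 (M * 0)) :=
    (FloorSemiring.tendsto_pow_div_factorial_atTop (C * t)).const_mul M
  rw [mul_zero] at ht'
  exact ge_of_tendsto' ht' fun n => key n t ht

lemma torus_norm_coe_le (r : ℝ) : ‖(r : Torus)‖ ≤ |r| := by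
  simpa using (QuotientAddGroup.norm_mk_le_norm (S := AddSubgroup.zmultiples (2 * Real.pi)) (m := r))

lemma torus_dist_le (a b : Torus) : dist a b ≤ Real.pi := by
  rw [dist_eq_norm]
  refine (AddCircle.norm_le_half_period (2 * Real.pi) (by positivity)).trans (le_of_eq ?_)
  rw [abs_of_pos (by positivity)]; ring

lemma integrable_of_bdd {α : Type*} [MeasurableSpace α] (μ : Measure α) [IsFiniteMeasure μ]
    (f : α → ℝ) (hf : Measurable f) (C : ℝ) (h : ∀ a, |f a| ≤ C) : Integrable f μ :=
  Integrable.of_bound hf.aestronglyMeasurable C (Eventually.of_forall h)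

lemma integrable_torus_dist {α : Type*} [MeasurableSpace α] (μ : Measure α) [IsFiniteMeasure μ]
    (f g : α → Torus) (hf : Measurable f) (hg : Measurable g) :
    Integrable (fun a => dist (f a) (g a)) μ := by
  refine integrable_of_bdd μ _ (hf.dist hg) Real.pi fun a => ?_
  rw [abs_of_nonneg dist_nonneg]; exact torus_dist_le _ _

lemma measurable_slice_left {Q R : Type*} [MeasurableSpace Q] [MeasurableSpace R]
    (φ : Q → R → Torus) (hφ : Measurable (Function.uncurry φ)) (q : Q) : Measurable (φ q) :=
  hφ.comp (measurable_const.prodMk measurable_id)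

lemma measurable_slice_right {Q R : Type*} [MeasurableSpace Q] [MeasurableSpace R]
    (φ : Q → R → Torus) (hφ : Measurable (Function.uncurry φ)) (s : R) :
    Measurable (fun q => φ q s) :=
  hφ.comp (measurable_id.prodMk measurable_const)

lemma BddLip2.measurable {Γ : Torus → Torus → ℝ} (h : BddLip2 Γ) :
    Measurable (fun p : Torus × Torus => Γ p.1 p.2) := by
  obtain ⟨⟨K, hK⟩, -⟩ := h
  exact hK.continuous.measurable

lemma abs_w_mul_le {w g M : ℝ} (hw : w ∈ Set.Icc (0:ℝ) 1) (hg : |g| ≤ M) : |w * g| ≤ M := by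
  rw [abs_mul, abs_of_nonneg hw.1]
  nlinarith [abs_nonneg g, hw.1, hw.2]

lemma measurable_mean {Q R : Type*} [MeasurableSpace Q] [MeasurableSpace R] (ν : Measure Q)
    [SFinite ν] {Γ : Torus → Torus → ℝ} (hΓ : BddLip2 Γ) (w : Q → ℝ) (hw : Measurable w)
    (φ : Q → R → Torus) (hφ : Measurable (Function.uncurry φ))
    (ψ : R → Torus) (hψ : Measurable ψ) :
    Measurable (fun s => ∫ q, w q * Γ (ψ s) (φ q s) ∂ν) := by
  refine StronglyMeasurable.measurable (StronglyMeasurable.integral_prod_right ?_)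
  refine Measurable.stronglyMeasurable ?_
  have h1 : Measurable (fun p : R × Q => φ p.2 p.1) :=
    hφ.comp (measurable_snd.prodMk measurable_fst)
  have h2 : Measurable (fun p : R × Q => Γ (ψ p.1) (φ p.2 p.1)) :=
    hΓ.measurable.comp ((hψ.comp measurable_fst).prodMk h1)
  exact (hw.comp measurable_snd).mul h2

lemma abs_mean_le {Q : Type*} [MeasurableSpace Q] (ν : Measure Q) [IsProbabilityMeasure ν]
    (f : Q → ℝ) (M : ℝ) (h : ∀ q, |f q| ≤ M) : |∫ q, f q ∂ν| ≤ M := by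
  simpa using norm_integral_le_of_norm_le_const (μ := ν) (f := f) (C := M) (Eventually.of_forall h)

lemma core_bound {Q : Type*} [MeasurableSpace Q] (ν : Measure Q) [IsProbabilityMeasure ν]
    {F : Torus → ℝ} {Γ : Torus → Torus → ℝ} (hF : BddLip F) (hΓ : BddLip2 Γ)
    (KF KΓ : NNReal) (hKF : LipschitzWith KF F)
    (hKΓ : LipschitzWith KΓ (fun p : Torus × Torus => Γ p.1 p.2))
    (w : Q → ℝ) (hw : Measurable w) (hw1 : ∀ q, w q ∈ Set.Icc (0:ℝ) 1)
    (φ φ' : Q → ℝ → Torus) (hφ : Measurable (Function.uncurry φ))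
    (hφ' : Measurable (Function.uncurry φ'))
    (ψ ψ' : ℝ → Torus) (hψ : Measurable ψ) (hψ' : Measurable ψ') (t : ℝ) :
    |(∫ s in Set.Icc 0 t, (F (ψ s) + ∫ q, w q * Γ (ψ s) (φ q s) ∂ν)) -
      ∫ s in Set.Icc 0 t, (F (ψ' s) + ∫ q, w q * Γ (ψ' s) (φ' q s) ∂ν)| ≤
    ∫ s in Set.Icc 0 t, (KF + KΓ : ℝ) *
      (dist (ψ s) (ψ' s) + ∫ q, dist (φ q s) (φ' q s) ∂ν) := by
  obtain ⟨-, MF, hMF⟩ := hF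
  obtain ⟨-, MΓ, hMΓ⟩ := id hΓ
  have hint : ∀ (φ : Q → ℝ → Torus) (ψ : ℝ → Torus), Measurable (Function.uncurry φ) →
      Measurable ψ → Integrable (fun s => F (ψ s) + ∫ q, w q * Γ (ψ s) (φ q s) ∂ν)
        (volume.restrict (Set.Icc 0 t)) := by
    intro φ ψ hφ hψ
    refine integrable_of_bdd _ _ ?_ (MF + MΓ) ?_
    · exact (hKF.continuous.measurable.comp hψ).add (measurable_mean ν hΓ w hw φ hφ ψ hψ)
    · intro s
      refine (abs_add_le _ _).trans (add_le_add (hMF _) (abs_mean_le ν _ _ fun q => ?_))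
      exact abs_w_mul_le (hw1 q) (hMΓ _ _)
  have hqint : ∀ (φ : Q → ℝ → Torus) (a : Torus) (s : ℝ), Measurable (Function.uncurry φ) →
      Integrable (fun q => w q * Γ a (φ q s)) ν := by
    intro φ a s hφ
    refine integrable_of_bdd _ _ ?_ MΓ ?_
    · have h1 : Measurable (fun q => φ q s) := hφ.comp (measurable_id.prodMk measurable_const)
      exact hw.mul (hΓ.measurable.comp (measurable_const.prodMk h1))
    · intro q
      exact abs_w_mul_le (hw1 q) (hMΓ _ _)
  have hdm : Measurable (fun p : Q × ℝ => dist (φ p.1 p.2) (φ' p.1 p.2)) := hφ.dist hφ'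
  rw [← integral_sub (hint φ ψ hφ hψ) (hint φ' ψ' hφ' hψ')]
  refine (abs_integral_le_integral_abs).trans ?_
  refine integral_mono_of_nonneg (Eventually.of_forall fun s => abs_nonneg _) ?_
    (Eventually.of_forall fun s => ?_)
  · refine Integrable.const_mul (Integrable.add ?_ ?_) _
    · refine integrable_of_bdd _ _ (hψ.dist hψ') Real.pi fun s => ?_
      rw [abs_of_nonneg dist_nonneg]; exact torus_dist_le _ _
    · refine integrable_of_bdd _ _ ?_ Real.pi fun s => abs_mean_le _ _ _ fun q => ?_
      · refine StronglyMeasurable.measurable (StronglyMeasurable.integral_prod_right ?_)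
        exact (hdm.comp (measurable_snd.prodMk measurable_fst)).stronglyMeasurable
      · rw [abs_of_nonneg dist_nonneg]; exact torus_dist_le _ _
  · have hdq : Integrable (fun q => dist (φ q s) (φ' q s)) ν := 
      integrable_torus_dist ν _ _ (measurable_slice_right φ hφ s) (measurable_slice_right φ' hφ' s)
    have e1 : |F (ψ s) - F (ψ' s)| ≤ KF * dist (ψ s) (ψ' s) := hKF.dist_le_mul _ _
    have e2 : |(∫ q, w q * Γ (ψ s) (φ q s) ∂ν) - ∫ q, w q * Γ (ψ' s) (φ' q s) ∂ν| ≤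
        KΓ * (dist (ψ s) (ψ' s) + ∫ q, dist (φ q s) (φ' q s) ∂ν) := by
      rw [← integral_sub (hqint φ _ s hφ) (hqint φ' _ s hφ')]
      refine (abs_integral_le_integral_abs).trans ?_
      have : (KΓ : ℝ) * (dist (ψ s) (ψ' s) + ∫ q, dist (φ q s) (φ' q s) ∂ν) =
          ∫ q, (KΓ : ℝ) * (dist (ψ s) (ψ' s) + dist (φ q s) (φ' q s)) ∂ν := by
        rw [integral_const_mul, integral_add (integrable_const _) hdq]
        simp
      rw [this]
      refine integral_mono_of_nonneg (Eventually.of_forall fun s => abs_nonneg _)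
        (((integrable_const _).add hdq).const_mul _) (Eventually.of_forall fun q => ?_)
      simp only
      rw [← mul_sub]
      refine abs_w_mul_le (hw1 q) ?_
      have := hKΓ.dist_le_mul (ψ s, φ q s) (ψ' s, φ' q s)
      rw [Real.dist_eq, Prod.dist_eq] at this
      refine this.trans (mul_le_mul_of_nonneg_left ?_ KΓ.2)
      exact max_le_add_of_nonneg dist_nonneg dist_nonneg
    have e3 : 0 ≤ ∫ q, dist (φ q s) (φ' q s) ∂ν := integral_nonneg fun q => dist_nonneg
    simp only
    calc _ = |(F (ψ s) - F (ψ' s)) + ((∫ q, w q * Γ (ψ s) (φ q s) ∂ν) -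
              ∫ q, w q * Γ (ψ' s) (φ' q s) ∂ν)| := by congr 1; ring
      _ ≤ _ := (abs_add_le _ _).trans (add_le_add e1 e2)
      _ ≤ _ := by nlinarith [mul_nonneg KF.2 e3]

/-- Time-clamped version of a process. -/
def clampPath {Ω : Type*} (T : ℝ) (θ : ℝ → Ω → ℝ → Torus) : ℝ × Ω → ℝ → Torus :=
  fun q s => θ q.1 q.2 (max 0 (min s T))

lemma clampPath_eq {Ω : Type*} (T : ℝ) (θ : ℝ → Ω → ℝ → Torus) (q : ℝ × Ω) (s : ℝ)
    (hs : s ∈ Set.Icc 0 T) : clampPath T θ q s = θ q.1 q.2 s := by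
  unfold clampPath
  rw [min_eq_left hs.2, max_eq_right hs.1]

lemma clampPath_meas {Ω : Type*} [MeasurableSpace Ω] (T : ℝ) (hT : 0 < T)
    (θ : ℝ → Ω → ℝ → Torus) (hm : Measurable (fun p : ℝ × Ω => θ p.1 p.2))
    (hc : ∀ x ω, ContinuousOn (θ x ω) (Set.Icc 0 T)) :
    Measurable (Function.uncurry (clampPath T θ)) := by
  suffices h : Measurable (Function.uncurry fun (s : ℝ) (q : ℝ × Ω) => clampPath T θ q s) from
    h.comp measurable_swap
  refine measurable_uncurry_of_continuous_of_measurable ?_ ?_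
  · intro q
    refine (hc q.1 q.2).comp_continuous (by fun_prop) fun s => ?_
    exact ⟨le_max_left _ _, max_le hT.le (min_le_right _ _)⟩
  · intro s
    exact (measurable_pi_apply _).comp hm

instance : IsProbabilityMeasure (volume.restrict I01) := ⟨by simp⟩

lemma drift_eq {Ω : Type*} [MeasurableSpace Ω] (T : ℝ) (hT : 0 < T)
    (P : Measure Ω) [IsProbabilityMeasure P]
    (F : Torus → ℝ) (Γ : Torus → Torus → ℝ) (hF : BddLip F) (hΓ : BddLip2 Γ)
    (W : ℝ → ℝ → ℝ) (hW : IsGraphon W) (θ : ℝ → Ω → ℝ → Torus)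
    (hm : Measurable (fun p : ℝ × Ω => θ p.1 p.2))
    (hc : ∀ x ω, ContinuousOn (θ x ω) (Set.Icc 0 T)) (x : ℝ) (ω : Ω) (t : ℝ)
    (ht : t ∈ Set.Icc 0 T) :
    drift F Γ W (fun y s => pathLaw P (θ y) s) x (θ x ω) t =
    ∫ s in Set.Icc 0 t, (F (clampPath T θ (x, ω) s) +
      ∫ q, W x q.1 * Γ (clampPath T θ (x, ω) s) (clampPath T θ q s)
        ∂((volume.restrict I01).prod P)) := by
  have hφ := clampPath_meas T hT θ hm hc
  have hψ : Measurable (clampPath T θ (x, ω)) := hφ.comp (measurable_const.prodMk measurable_id)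
  have hw : Measurable (fun q : ℝ × Ω => W x q.1) :=
    hW.1.comp (measurable_const.prodMk measurable_fst)
  obtain ⟨⟨KF, hKF⟩, MF, hMF⟩ := hF
  obtain ⟨-, MΓ, hMΓ⟩ := id hΓ
  rw [integral_add]
  · unfold drift
    congr 1
    · refine setIntegral_congr_fun measurableSet_Icc fun s hs => ?_
      rw [clampPath_eq T θ (x, ω) s ⟨hs.1, hs.2.trans ht.2⟩]
    · refine setIntegral_congr_fun measurableSet_Icc fun s hs => ?_
      have hs' : s ∈ Set.Icc 0 T := ⟨hs.1, hs.2.trans ht.2⟩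
      rw [integral_prod]
      · refine integral_congr_ae (Eventually.of_forall fun y => ?_)
        simp only
        rw [integral_const_mul]
        congr 1
        unfold pathLaw
        rw [integral_map]
        · refine integral_congr_ae (Eventually.of_forall fun ω' => ?_)
          simp only
          rw [clampPath_eq T θ (x, ω) s hs', clampPath_eq T θ (y, ω') s hs']
        · exact ((measurable_pi_apply s).comp
            (hm.comp (measurable_const.prodMk measurable_id))).aemeasurable
        · exact (hΓ.measurable.comp
            (measurable_const.prodMk measurable_id)).aestronglyMeasurable
      · refine integrable_of_bdd _ _ ?_ MΓ fun q => abs_w_mul_le (hW.2.1 _ _) (hMΓ _ _)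
        have h1 : Measurable (fun q => clampPath T θ q s) :=
          hφ.comp (measurable_id.prodMk measurable_const)
        exact hw.mul (hΓ.measurable.comp (measurable_const.prodMk h1))
  · exact integrable_of_bdd _ _ (hKF.continuous.measurable.comp hψ) MF fun s => hMF _
  · refine integrable_of_bdd _ _ (measurable_mean _ hΓ _ hw _ hφ _ hψ) MΓ fun s =>
      abs_mean_le _ _ _ fun q => abs_w_mul_le (hW.2.1 _ _) (hMΓ _ _)

/-- pathwise uniqueness for the labeled nonlinear system: if `θ` and `θ'`
are both solutions of the nonlinear system for the labeled graphon `W` with the same initial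
datum `θ0` and the same driving processes `B`, then for almost every `x ∈ I`, `P`-almost
surely, `θ^x_t = θ'^x_t` for all `t ∈ [0,T]`. -/
theorem labeled_nonlinear_system_pathwise_uniqueness
    {Ω : Type*} [MeasurableSpace Ω] (T : ℝ) (hT : 0 < T)
    (P : Measure Ω) [IsProbabilityMeasure P]
    (F : Torus → ℝ) (Γ : Torus → Torus → ℝ) (hF : BddLip F) (hΓ : BddLip2 Γ)
    (W : ℝ → ℝ → ℝ) (hW : IsGraphon W)
    (θ0 : ℝ → Ω → Torus) (hθ0 : Measurable (fun p : ℝ × Ω => θ0 p.1 p.2))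
    (B : ℝ → Ω → ℝ → ℝ) (hBmeas : Measurable (fun p : ℝ × Ω => B p.1 p.2))
    (hB0 : ∀ x ω, B x ω 0 = 0)
    (θ θ' : ℝ → Ω → ℝ → Torus)
    (hθ : IsLabeledSolution T P F Γ W θ0 B θ)
    (hθ' : IsLabeledSolution T P F Γ W θ0 B θ') :
    ∀ᵐ x ∂(volume.restrict I01), ∀ᵐ ω ∂P, ∀ t ∈ Set.Icc (0:ℝ) T, θ x ω t = θ' x ω t := by
  obtain ⟨KF, hKF⟩ := id hF.1
  obtain ⟨KΓ, hKΓ⟩ := id hΓ.1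
  set ν : Measure (ℝ × Ω) := (volume.restrict I01).prod P with hν
  set φ := clampPath T θ with hφd
  set φ' := clampPath T θ' with hφd'
  have hφ : Measurable (Function.uncurry φ) := clampPath_meas T hT θ hθ.jointMeas hθ.cont
  have hφ' : Measurable (Function.uncurry φ') := clampPath_meas T hT θ' hθ'.jointMeas hθ'.cont
  set C : ℝ := KF + KΓ with hC
  have hC0 : 0 ≤ C := add_nonneg KF.2 KΓ.2
  have hdm : Measurable (fun p : (ℝ × Ω) × ℝ => dist (φ p.1 p.2) (φ' p.1 p.2)) := hφ.dist hφ'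
  have hdb : ∀ q s, |dist (φ q s) (φ' q s)| ≤ Real.pi := fun q s => by
    rw [abs_of_nonneg dist_nonneg]; exact torus_dist_le _ _
  set G : ℝ → ℝ := fun s => ∫ q, dist (φ q s) (φ' q s) ∂ν with hG
  have hG0 : ∀ s, 0 ≤ G s := fun s => integral_nonneg fun q => dist_nonneg
  have hGb : ∀ s, |G s| ≤ Real.pi := fun s => abs_mean_le _ _ _ fun q => hdb q s
  have hGm : Measurable G :=
    StronglyMeasurable.measurable (StronglyMeasurable.integral_prod_right
      (hdm.comp (measurable_snd.prodMk measurable_fst)).stronglyMeasurable)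
  have hGi : ∀ t : ℝ, Integrable G (volume.restrict (Set.Icc 0 t)) := fun t =>
    integrable_of_bdd _ _ hGm Real.pi hGb
  have hdi : ∀ (q : ℝ × Ω) (t : ℝ), Integrable (fun s => dist (φ q s) (φ' q s))
      (volume.restrict (Set.Icc 0 t)) := fun q t =>
    integrable_torus_dist _ _ _ (measurable_slice_left φ hφ q) (measurable_slice_left φ' hφ' q)
  have main : ∀ᵐ x ∂(volume.restrict I01), ∀ᵐ ω ∂P, ∀ t ∈ Set.Icc (0:ℝ) T,
      dist (φ (x, ω) t) (φ' (x, ω) t) ≤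
        C * ((∫ s in Set.Icc 0 t, dist (φ (x, ω) s) (φ' (x, ω) s)) +
          ∫ s in Set.Icc 0 t, G s) := by
    filter_upwards [hθ.sde, hθ'.sde] with x hx hx'
    filter_upwards [hx, hx'] with ω hω hω' t ht
    rw [hφd, hφd', clampPath_eq T θ (x, ω) t ht, clampPath_eq T θ' (x, ω) t ht]
    simp only
    rw [hω t ht, hω' t ht, dist_add_left, dist_eq_norm, ← AddCircle.coe_sub]
    refine (torus_norm_coe_le _).trans ?_
    rw [add_sub_add_right_eq_sub,
      drift_eq T hT P F Γ hF hΓ W hW θ hθ.jointMeas hθ.cont x ω t ht,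
      drift_eq T hT P F Γ hF hΓ W hW θ' hθ'.jointMeas hθ'.cont x ω t ht]
    refine (core_bound ν hF hΓ KF KΓ hKF hKΓ (fun q => W x q.1)
      (hW.1.comp (measurable_const.prodMk measurable_fst)) (fun q => hW.2.1 _ _)
      φ φ' hφ hφ' (φ (x, ω)) (φ' (x, ω)) (measurable_slice_left φ hφ _)
      (measurable_slice_left φ' hφ' _) t).trans (le_of_eq ?_)
    rw [integral_const_mul, integral_add (hdi _ t) (hGi t)]
  -- first Gronwall: the averaged distance vanishes
  have hGz : ∀ t ∈ Set.Icc (0:ℝ) T, G t = 0 := by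
    refine gronwall_zero G T (2 * C) Real.pi (by positivity) hG0
      (fun s => (le_abs_self _).trans (hGb s)) fun t ht => ?_
    have hIm : Measurable (fun q : ℝ × Ω => ∫ s in Set.Icc 0 t, dist (φ q s) (φ' q s)) :=
      StronglyMeasurable.measurable (StronglyMeasurable.integral_prod_right
        hdm.stronglyMeasurable)
    have hprod : Integrable (Function.uncurry fun (q : ℝ × Ω) s => dist (φ q s) (φ' q s))
        (ν.prod (volume.restrict (Set.Icc 0 t))) :=
      integrable_of_bdd _ _ hdm Real.pi fun p => hdb p.1 p.2
    have hae : ∀ᵐ q ∂ν, dist (φ q t) (φ' q t) ≤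
        C * ((∫ s in Set.Icc 0 t, dist (φ q s) (φ' q s)) + ∫ s in Set.Icc 0 t, G s) := by
      rw [hν, Measure.ae_prod_iff_ae_ae]
      · filter_upwards [main] with x hx
        filter_upwards [hx] with ω hω using hω t ht
      · exact measurableSet_le
          ((measurable_slice_right φ hφ t).dist (measurable_slice_right φ' hφ' t))
          ((hIm.add_const _).const_mul _)
    have hIi : Integrable (fun q : ℝ × Ω => ∫ s in Set.Icc 0 t, dist (φ q s) (φ' q s)) ν :=
      hprod.integral_prod_left
    have hle := integral_mono_of_nonneg (Eventually.of_forall fun q => dist_nonneg)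
      ((hIi.add (integrable_const _)).const_mul C) hae
    refine hle.trans (le_of_eq ?_)
    rw [integral_const_mul]
    simp only [Pi.add_apply]
    rw [integral_add hIi (integrable_const _), integral_integral_swap hprod]
    simp only [integral_const, probReal_univ, smul_eq_mul, one_mul]
    change C * ((∫ s in Set.Icc 0 t, G s) + ∫ s in Set.Icc 0 t, G s) = _
    ring
  filter_upwards [main] with x hx
  filter_upwards [hx] with ω hω
  have hz : ∀ t ∈ Set.Icc (0:ℝ) T, dist (φ (x, ω) t) (φ' (x, ω) t) = 0 := by
    refine gronwall_zero (fun t => dist (φ (x, ω) t) (φ' (x, ω) t)) T C Real.pi hC0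
      (fun s => dist_nonneg) (fun s => torus_dist_le _ _) fun t ht => ?_
    have h0 : ∫ s in Set.Icc 0 t, G s = 0 := by
      rw [setIntegral_congr_fun (g := fun _ => (0:ℝ)) measurableSet_Icc
        fun s hs => hGz s ⟨hs.1, hs.2.trans ht.2⟩]
      simp
    have := hω t ht
    rwa [h0, add_zero] at this
  intro t ht
  have h := dist_eq_zero.1 (hz t ht)
  rwa [hφd, hφd', clampPath_eq T θ (x, ω) t ht, clampPath_eq T θ' (x, ω) t ht] at h
end
end

section
/- Suppose θ is a solution of the nonlinear system for the labeled graphon W with initial datum θ₀ and driving processes B, where for almost every x ∈ I the process B^x is a standard Brownian motion independent of θ^x_0. Then for almost every x ∈ I the marginal laws μ^x_t = Law(θ^x_t) solve the labeled nonlinear Fokker–Planck equation weakly: for every twice continuously differentiable f : 𝕋 → ℝ and every t ∈ [0,T], ∫_𝕋 f dμ^x_t − ∫_𝕋 f dμ^x_0 = ∫₀ᵗ ∫_𝕋 ( ½ f''(θ) + f'(θ) [ F(θ) + ∫_I W(x,y) ∫_𝕋 Γ(θ,u) μ^y_s(du) dy ] ) μ^x_s(dθ) ds. -/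
open MeasureTheory ProbabilityTheory Real Set Filter Topology

noncomputable section

/-- A standard Brownian motion on `[0,T]`: a continuous real-valued process starting at `0`
whose increment `B_t − B_s` is Gaussian of mean `0` and variance `t − s` and is independent
of the past `(B_r)_{r ≤ s}`. -/
def IsStandardBM {Ω : Type*} [MeasurableSpace Ω] (T : ℝ) (P : Measure Ω)
    (B : Ω → ℝ → ℝ) : Prop :=
  (∀ ω, B ω 0 = 0) ∧ (∀ ω, ContinuousOn (B ω) (Set.Icc 0 T)) ∧
  (∀ s : ℝ, Measurable (fun ω => B ω s)) ∧
  (∀ s t : ℝ, 0 ≤ s → s ≤ t → t ≤ T →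
    P.map (fun ω => B ω t - B ω s) = ProbabilityTheory.gaussianReal 0 (Real.toNNReal (t - s)) ∧
    ProbabilityTheory.IndepFun (fun ω => B ω t - B ω s)
      (fun ω => (fun r : Set.Icc (0:ℝ) s => B ω r)) P)


lemma torus_cont_of_lift {f : Torus → ℝ} (h : Continuous (fun s : ℝ => f (s : Torus))) :
    Continuous f :=
  (QuotientAddGroup.isQuotientMap_mk (N := AddSubgroup.zmultiples (2 * Real.pi))).continuous_iff.2 h

lemma torus_bdd {f : Torus → ℝ} (h : Continuous f) : ∃ C : ℝ, 0 ≤ C ∧ ∀ u, |f u| ≤ C := by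
  obtain ⟨C, hC⟩ := isCompact_univ.exists_bound_of_continuousOn (f := f) h.continuousOn
  refine ⟨C, (norm_nonneg _).trans (hC 0 (mem_univ _)), fun u => hC u (mem_univ _)⟩

lemma torus_modulus {f : Torus → ℝ} (h : Continuous f) {ε : ℝ} (hε : 0 < ε) :
    ∃ C : ℝ, 0 ≤ C ∧ ∀ u v, |f u - f v| ≤ ε + C * dist u v ^ 2 := by
  obtain ⟨S, hS0, hS⟩ := torus_bdd h
  have huc : UniformContinuous f := CompactSpace.uniformContinuous_of_continuous h
  obtain ⟨δ, hδ, hd⟩ := Metric.uniformContinuous_iff.1 huc ε hε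
  refine ⟨2 * S / δ ^ 2, by positivity, fun u v => ?_⟩
  by_cases hc : dist u v < δ
  · have := hd hc
    rw [Real.dist_eq] at this
    have h2 : 0 ≤ 2 * S / δ ^ 2 * dist u v ^ 2 := by positivity
    linarith
  · push Not at hc
    have h1 : |f u - f v| ≤ 2 * S := by
      have := abs_sub (f u) (f v)
      linarith [hS u, hS v]
    have h2 : 2 * S ≤ 2 * S / δ ^ 2 * dist u v ^ 2 := by
      have : δ ^ 2 ≤ dist u v ^ 2 := by gcongr
      rw [div_mul_eq_mul_div, le_div_iff₀ (by positivity)]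
      gcongr
    linarith

lemma taylor_bound (f f' f'' : Torus → ℝ)
    (h1 : ∀ r : ℝ, HasDerivAt (fun s : ℝ => f (s : Torus)) (f' (r : Torus)) r)
    (h2 : ∀ r : ℝ, HasDerivAt (fun s : ℝ => f' (s : Torus)) (f'' (r : Torus)) r)
    {ε C : ℝ} (hC : 0 ≤ C)
    (hmod : ∀ u v, |f'' u - f'' v| ≤ ε + C * dist u v ^ 2) (u : Torus) (z : ℝ) :
    |f (u + (z : Torus)) - f u - f' u * z - (1/2) * f'' u * z ^ 2| ≤ (ε + C * z ^ 2) * z ^ 2 := by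
  obtain ⟨a, rfl⟩ := QuotientAddGroup.mk_surjective u
  change |f ((a : Torus) + (z : Torus)) - f (a : Torus) - f' (a : Torus) * z
    - (1/2) * f'' (a : Torus) * z ^ 2| ≤ (ε + C * z ^ 2) * z ^ 2
  have d1 : ∀ r : ℝ, HasDerivAt (fun s : ℝ => f ((a + s : ℝ) : Torus)) (f' ((a + r : ℝ) : Torus)) r :=
    fun r => HasDerivAt.comp_const_add a r (h1 (a + r))
  have d2 : ∀ r : ℝ, HasDerivAt (fun s : ℝ => f' ((a + s : ℝ) : Torus)) (f'' ((a + r : ℝ) : Torus)) r :=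
    fun r => HasDerivAt.comp_const_add a r (h2 (a + r))
  set η := ε + C * z ^ 2 with hη
  have b0 : ∀ r ∈ Icc (-|z|) |z|, ‖f'' ((a + r : ℝ) : Torus) - f'' (a : Torus)‖ ≤ η := by
    intro r hr
    refine (hmod _ _).trans ?_
    have hr' : |r| ≤ |z| := abs_le.2 hr
    have : dist ((a + r : ℝ) : Torus) (a : Torus) ≤ |z| := by
      rw [dist_eq_norm, AddCircle.coe_add, add_sub_cancel_left]
      exact (torus_norm_coe_le r).trans hr'
    have : dist ((a + r : ℝ) : Torus) (a : Torus) ^ 2 ≤ z ^ 2 := by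
      rw [← sq_abs z]; gcongr
    rw [hη]; gcongr
  have hz : z ∈ Icc (-|z|) |z| := ⟨neg_abs_le z, le_abs_self z⟩
  have h0 : (0:ℝ) ∈ Icc (-|z|) |z| := ⟨by simp, by simp⟩
  have hη0 : 0 ≤ η := (norm_nonneg _).trans (b0 0 h0)
  have b1 : ∀ r ∈ Icc (-|z|) |z|,
      ‖f' ((a + r : ℝ) : Torus) - f' (a : Torus) - f'' (a : Torus) * r‖ ≤ η * |z| := by
    intro r hr
    have := (convex_Icc (-|z|) |z|).norm_image_sub_le_of_norm_hasDerivWithin_le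
      (f := fun s : ℝ => f' ((a + s : ℝ) : Torus) - f'' (a : Torus) * s)
      (f' := fun s : ℝ => f'' ((a + s : ℝ) : Torus) - f'' (a : Torus))
      (fun s _ => by
        have := ((d2 s).sub ((hasDerivAt_id s).const_mul (f'' (a : Torus)))).hasDerivWithinAt
          (s := Icc (-|z|) |z|)
        refine this.congr_deriv ?_
        simp)
      b0 h0 hr
    simp only [add_zero, mul_zero, sub_zero] at this
    have e : f' ((a + r : ℝ) : Torus) - f' (a : Torus) - f'' (a : Torus) * r
      = f' ((a + r : ℝ) : Torus) - f'' (a : Torus) * r - f' (a : Torus) := by ring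
    rw [e]
    refine this.trans ?_
    have hr' : ‖r‖ ≤ |z| := abs_le.2 hr
    gcongr
  have b2 := (convex_Icc (-|z|) |z|).norm_image_sub_le_of_norm_hasDerivWithin_le
      (f := fun s : ℝ => f ((a + s : ℝ) : Torus) - f' (a : Torus) * s - (1/2) * f'' (a : Torus) * s ^ 2)
      (f' := fun s : ℝ => f' ((a + s : ℝ) : Torus) - f' (a : Torus) - f'' (a : Torus) * s)
      (fun s _ => by
        have := (((d1 s).sub ((hasDerivAt_id s).const_mul (f' (a : Torus)))).sub
          ((hasDerivAt_pow 2 s).const_mul ((1/2) * f'' (a : Torus)))).hasDerivWithinAt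
          (s := Icc (-|z|) |z|)
        refine this.congr_deriv ?_
        simp; ring)
      b1 h0 hz
  simp only [add_zero, mul_zero, sub_zero, ne_eq, OfNat.ofNat_ne_zero, not_false_eq_true, zero_pow]
    at b2
  rw [AddCircle.coe_add] at b2
  have e : f ((a : Torus) + (z : Torus)) - f (a : Torus) - f' (a : Torus) * z
    - (1/2) * f'' (a : Torus) * z ^ 2 = f ((a : Torus) + (z : Torus)) - f' (a : Torus) * z
    - (1/2) * f'' (a : Torus) * z ^ 2 - f (a : Torus) := by ring
  rw [e]
  refine b2.trans (le_of_eq ?_)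
  rw [Real.norm_eq_abs, mul_assoc, ← sq, sq_abs]

/-- Moments of the Gaussian. -/
lemma gauss_moments : ∃ m : ℝ, 0 ≤ m ∧ ∀ h : ℝ, 0 ≤ h →
    Integrable (fun x : ℝ => x) (gaussianReal 0 h.toNNReal) ∧
    Integrable (fun x : ℝ => x ^ 2) (gaussianReal 0 h.toNNReal) ∧
    Integrable (fun x : ℝ => x ^ 4) (gaussianReal 0 h.toNNReal) ∧
    ∫ x, x ∂(gaussianReal 0 h.toNNReal) = 0 ∧
    ∫ x, x ^ 2 ∂(gaussianReal 0 h.toNNReal) = h ∧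
    ∫ x, x ^ 4 ∂(gaussianReal 0 h.toNNReal) = m * h ^ 2 := by
  refine ⟨∫ x, x ^ 4 ∂(gaussianReal 0 1), integral_nonneg (fun x => by positivity), fun h hh => ?_⟩
  have i1 : Integrable (fun x : ℝ => x) (gaussianReal 0 h.toNNReal) :=
    (memLp_id_gaussianReal' 1 (by simp)).integrable le_rfl
  have i2 : Integrable (fun x : ℝ => x ^ 2) (gaussianReal 0 h.toNNReal) :=
    (memLp_id_gaussianReal' 2 (by simp)).integrable_sq
  have i4 : Integrable (fun x : ℝ => x ^ 4) (gaussianReal 0 h.toNNReal) := by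
    have := (memLp_id_gaussianReal' (μ := 0) (v := h.toNNReal) 4 (by simp)).integrable_norm_pow (p := 4) (by simp)
    refine this.congr (ae_of_all _ fun x => ?_)
    simp [Even.pow_abs (show Even 4 by decide)]
  refine ⟨i1, i2, i4, integral_id_gaussianReal, ?_, ?_⟩
  · have := variance_id_gaussianReal (μ := 0) (v := h.toNNReal)
    rw [variance_of_integral_eq_zero aemeasurable_id (by simp [integral_id_gaussianReal])] at this
    simpa [hh] using this
  · have hm := gaussianReal_map_const_mul (μ := 0) (v := 1) (√h)
    have hv : (NNReal.mk (√h ^ 2) (sq_nonneg _) * 1 : NNReal) = h.toNNReal := by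
      rw [mul_one]
      ext
      rw [Real.coe_toNNReal _ hh]
      exact Real.sq_sqrt hh
    rw [mul_zero, hv] at hm
    rw [← hm, integral_map (by fun_prop) (by fun_prop)]
    simp_rw [mul_pow]
    rw [integral_const_mul, mul_comm]
    congr 1
    rw [show (4:ℕ) = 2 * 2 from rfl, pow_mul, Real.sq_sqrt hh]

lemma indep_triple {Ω α β γ : Type*} [MeasurableSpace Ω] [MeasurableSpace α] [MeasurableSpace β]
    [MeasurableSpace γ] (P : Measure Ω) [IsProbabilityMeasure P] {X : Ω → α} {Y : Ω → β} {Z : Ω → γ}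
    (hX : Measurable X) (hY : Measurable Y) (hZ : Measurable Z)
    (h1 : IndepFun Y Z P) (h2 : IndepFun X (fun ω => (Y ω, Z ω)) P) :
    IndepFun Y (fun ω => (X ω, Z ω)) P := by
  have hXZ : IndepFun X Z P := h2.comp (φ := id) (ψ := Prod.snd) measurable_id measurable_snd
  rw [indepFun_iff_map_prod_eq_prod_map_map (by fun_prop) (by fun_prop)] at h1 h2 hXZ ⊢
  have : IsProbabilityMeasure (P.map X) := Measure.isProbabilityMeasure_map (by fun_prop)
  have : IsProbabilityMeasure (P.map Y) := Measure.isProbabilityMeasure_map (by fun_prop)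
  have : IsProbabilityMeasure (P.map Z) := Measure.isProbabilityMeasure_map (by fun_prop)
  rw [hXZ]
  rw [h1] at h2
  have e : P.map (fun ω => (Y ω, (X ω, Z ω))) =
      (P.map (fun ω => (X ω, (Y ω, Z ω)))).map (fun p => (p.2.1, (p.1, p.2.2))) := by
    rw [Measure.map_map (by fun_prop) (by fun_prop)]; rfl
  rw [e, h2]
  have m1 : ((P.map X).prod ((P.map Y).prod (P.map Z))) =
    (((P.map X).prod (P.map Y)).prod (P.map Z)).map MeasurableEquiv.prodAssoc :=
    (Measure.prodAssoc_prod).symm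
  have m2 : ((P.map Y).prod ((P.map X).prod (P.map Z))) =
    (((P.map Y).prod (P.map X)).prod (P.map Z)).map MeasurableEquiv.prodAssoc :=
    (Measure.prodAssoc_prod).symm
  rw [m1, m2, ← Measure.prod_swap (μ := P.map X) (ν := P.map Y)]
  conv_rhs => rw [← Measure.map_id (μ := P.map Z), Measure.map_prod_map _ _ measurable_swap measurable_id]
  rw [Measure.map_map (by fun_prop) (by fun_prop), Measure.map_map (by fun_prop) (by fun_prop)]
  rfl

/-- Picard iteration for the equation with additive noise `β`. -/
def picard (b : ℝ → Torus → ℝ) (a : Torus) (β : ℝ → ℝ) : ℕ → ℝ → Torus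
  | 0 => fun _ => a
  | n + 1 => fun s => a + (((∫ r in (0:ℝ)..s, b r (picard b a β n r)) + β s : ℝ) : Torus)

lemma picard_cont (b : ℝ → Torus → ℝ) (hb : Continuous (Function.uncurry b)) (a : Torus)
    (β : ℝ → ℝ) (hβ : Continuous β) (n : ℕ) : Continuous (picard b a β n) := by
  induction n with
  | zero => exact continuous_const
  | succ n ih =>
    have h1 : Continuous (fun r => b r (picard b a β n r)) :=
      hb.comp (continuous_id.prodMk ih)
    have h2 : Continuous (fun s => ∫ r in (0:ℝ)..s, b r (picard b a β n r)) :=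
      intervalIntegral.continuous_primitive (fun _ _ => h1.intervalIntegrable _ _) 0
    exact continuous_const.add ((AddCircle.continuous_mk' _).comp (h2.add hβ))

lemma meas_intervalIntegral {Ω : Type*} [MeasurableSpace Ω] (b : ℝ → Torus → ℝ)
    (hb : Continuous (Function.uncurry b)) (θ : Ω → ℝ → Torus)
    (hc : ∀ ω, Continuous (θ ω)) (hm : ∀ s, Measurable (fun ω => θ ω s)) (s t : ℝ) :
    Measurable (fun ω => ∫ r in s..t, b r (θ ω r)) := by
  have h1 : Measurable (Function.uncurry (fun (r : ℝ) (ω : Ω) => b r (θ ω r))) := by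
    apply measurable_uncurry_of_continuous_of_measurable
    · intro ω; exact hb.comp (continuous_id.prodMk (hc ω))
    · intro r
      have : Continuous (b r) := hb.comp (continuous_const.prodMk continuous_id)
      exact this.measurable.comp (hm r)
  have h2 : StronglyMeasurable (Function.uncurry (fun (r : ℝ) (ω : Ω) => b r (θ ω r))) :=
    h1.stronglyMeasurable
  simp only [intervalIntegral]
  exact (h2.integral_prod_left (μ := volume.restrict (Ioc s t))).measurable.sub
    (h2.integral_prod_left (μ := volume.restrict (Ioc t s))).measurable

lemma picard_meas {Ω : Type*} [MeasurableSpace Ω] (b : ℝ → Torus → ℝ)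
    (hb : Continuous (Function.uncurry b)) (θ0 : Ω → Torus) (h0 : Measurable θ0)
    (β : Ω → ℝ → ℝ) (hβ : ∀ ω, Continuous (β ω)) (hβm : ∀ s, Measurable (fun ω => β ω s)) (n : ℕ) :
    ∀ s, Measurable (fun ω => picard b (θ0 ω) (β ω) n s) := by
  induction n with
  | zero => exact fun _ => h0
  | succ n ih =>
    intro s
    have := meas_intervalIntegral b hb (fun ω => picard b (θ0 ω) (β ω) n)
      (fun ω => picard_cont b hb _ _ (hβ ω) n) ih 0 s
    exact h0.add ((AddCircle.continuous_mk' (2 * Real.pi)).measurable.comp (this.add (hβm s)))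

lemma picard_conv (b : ℝ → Torus → ℝ) (hb : Continuous (Function.uncurry b)) (K : ℝ) (hK0 : 0 ≤ K)
    (hK : ∀ s u v, |b s u - b s v| ≤ K * dist u v) (a : Torus)
    (β : ℝ → ℝ) (hβ : Continuous β) (p : ℝ → Torus) (hp : Continuous p) (t : ℝ) (ht : 0 ≤ t)
    (heq : ∀ s ∈ Icc 0 t, p s = a + (((∫ r in (0:ℝ)..s, b r (p r)) + β s : ℝ) : Torus)) :
    Tendsto (fun n => picard b a β n t) atTop (𝓝 (p t)) := by
  have key : ∀ n : ℕ, ∀ s ∈ Icc 0 t, dist (picard b a β n s) (p s) ≤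
      Real.pi * (K ^ n * s ^ n / n.factorial) := by
    intro n
    induction n with
    | zero =>
      intro s _
      rw [dist_eq_norm]
      have := AddCircle.norm_le_half_period (2 * Real.pi) (x := picard b a β 0 s - p s) (by positivity)
      rw [abs_of_pos (by positivity)] at this
      simp only [pow_zero, Nat.factorial_zero, Nat.cast_one]
      linarith
    | succ n ih =>
      intro s hs
      have c1 : Continuous (fun r => b r (picard b a β n r)) :=
        hb.comp (continuous_id.prodMk (picard_cont b hb a β hβ n))
      have c2 : Continuous (fun r => b r (p r)) := hb.comp (continuous_id.prodMk hp)
      rw [heq s hs, dist_eq_norm]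
      simp only [picard]
      rw [add_sub_add_left_eq_sub, ← AddCircle.coe_sub, add_sub_add_right_eq_sub,
        ← intervalIntegral.integral_sub (c1.intervalIntegrable _ _) (c2.intervalIntegrable _ _)]
      refine (torus_norm_coe_le _).trans ?_
      have := intervalIntegral.norm_integral_le_of_norm_le hs.1
        (f := fun r => b r (picard b a β n r) - b r (p r))
        (g := fun r => K * (Real.pi * (K ^ n * r ^ n / n.factorial)))
        (μ := volume)
        (ae_of_all _ fun r hr => (hK _ _ _).trans (by
          have := ih r ⟨hr.1.le, hr.2.trans hs.2⟩
          gcongr))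
        (Continuous.intervalIntegrable (by fun_prop) _ _)
      refine this.trans (le_of_eq ?_)
      have e : (fun r : ℝ => K * (Real.pi * (K ^ n * r ^ n / n.factorial))) =
        fun r => (K * Real.pi * K ^ n / n.factorial) * r ^ n := by
        ext r; ring
      rw [e, intervalIntegral.integral_const_mul, integral_pow, Nat.factorial_succ]
      push_cast
      have : (n.factorial : ℝ) ≠ 0 := by positivity
      field_simp
      simp
      ring
  rw [tendsto_iff_dist_tendsto_zero]
  refine squeeze_zero (fun _ => dist_nonneg) (fun n => key n t ⟨ht, le_rfl⟩) ?_
  have := (FloorSemiring.tendsto_pow_div_factorial_atTop (K * t)).const_mul Real.pi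
  simpa [mul_pow] using this

/-- `θ_t` is independent of the increment after `t`, in the form needed. -/
lemma indep_integral {Ω : Type*} [MeasurableSpace Ω] (P : Measure Ω) [IsProbabilityMeasure P]
    (b : ℝ → Torus → ℝ) (hb : Continuous (Function.uncurry b)) (K : ℝ) (hK0 : 0 ≤ K)
    (hK : ∀ s u v, |b s u - b s v| ≤ K * dist u v)
    (θ0 : Ω → Torus) (hθ0 : Measurable θ0) (B : Ω → ℝ → ℝ) (hBc : ∀ ω, Continuous (B ω))
    (hBm : ∀ s, Measurable (fun ω => B ω s)) (θ : Ω → ℝ → Torus) (hθc : ∀ ω, Continuous (θ ω))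
    (t : ℝ) (ht : 0 ≤ t) (heq : ∀ᵐ ω ∂P, ∀ s ∈ Icc 0 t,
      θ ω s = θ0 ω + (((∫ r in (0:ℝ)..s, b r (θ ω r)) + B ω s : ℝ) : Torus))
    (D : Ω → ℝ) (hD : Measurable D) (hind : IndepFun θ0 (fun ω => (B ω, D ω)) P)
    (hind2 : IndepFun D (fun ω => (fun r : Set.Icc (0:ℝ) t => B ω r)) P)
    (g : Torus → ℝ) (hg : Continuous g) (ψ : ℝ → ℝ) (hψ : Measurable ψ)
    (hpsi : Integrable (fun ω => ψ (D ω)) P) :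
    ∫ ω, g (θ ω t) * ψ (D ω) ∂P = (∫ ω, g (θ ω t) ∂P) * ∫ ω, ψ (D ω) ∂P := by
  obtain ⟨C, hC0, hC⟩ := torus_bdd hg
  set Z : Ω → (Set.Icc (0:ℝ) t → ℝ) := fun ω => (fun r : Set.Icc (0:ℝ) t => B ω r) with hZ
  have hZm : Measurable Z := measurable_pi_lambda _ fun r => hBm r
  have h3 : IndepFun D (fun ω => (θ0 ω, Z ω)) P := by
    refine indep_triple P hθ0 hD hZm hind2 ?_
    exact hind.comp (φ := id) (ψ := fun p : (ℝ → ℝ) × ℝ => (p.2, fun r : Set.Icc (0:ℝ) t => p.1 r))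
      measurable_id (by fun_prop)
  set β : Ω → ℝ → ℝ := fun ω s => B ω (projIcc 0 t ht s) with hβ
  have hβc : ∀ ω, Continuous (β ω) := fun ω =>
    (hBc ω).comp (continuous_subtype_val.comp continuous_projIcc)
  set X : ℕ → Ω → Torus := fun n ω => picard b (θ0 ω) (β ω) n t with hX
  have hXind : ∀ n, IndepFun D (X n) P := by
    intro n
    have hm : @Measurable _ _ (MeasurableSpace.comap (fun ω => (θ0 ω, Z ω)) inferInstance) _ (X n) := by
      refine @picard_meas Ω (MeasurableSpace.comap (fun ω => (θ0 ω, Z ω)) inferInstance) b hb θ0 ?_ β hβc ?_ n t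
      · exact measurable_fst.comp (comap_measurable _)
      · intro s
        exact ((measurable_pi_apply (projIcc 0 t ht s)).comp measurable_snd).comp
          (comap_measurable (fun ω => (θ0 ω, Z ω)))
    rw [IndepFun_iff_Indep] at h3 ⊢
    exact indep_of_indep_of_le_right h3 hm.comap_le
  have hXm : ∀ n, Measurable (X n) := fun n => picard_meas b hb θ0 hθ0 β hβc (fun s => hBm _) n t
  have hlim : ∀ᵐ ω ∂P, Tendsto (fun n => X n ω) atTop (𝓝 (θ ω t)) := by
    filter_upwards [heq] with ω hω
    refine picard_conv b hb K hK0 hK _ _ (hβc ω) _ (hθc ω) t ht (fun s hs => ?_)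
    rw [hω s hs]
    simp only [hβ, projIcc_of_mem ht hs]
  have heqn : ∀ n, ∫ ω, g (X n ω) * ψ (D ω) ∂P = (∫ ω, g (X n ω) ∂P) * ∫ ω, ψ (D ω) ∂P := by
    intro n
    have := ((hXind n).symm.comp hg.measurable hψ)
    exact this.integral_fun_mul_eq_mul_integral
      (hg.measurable.comp (hXm n)).aestronglyMeasurable hpsi.aestronglyMeasurable
  have l1 : Tendsto (fun n => ∫ ω, g (X n ω) * ψ (D ω) ∂P) atTop
      (𝓝 (∫ ω, g (θ ω t) * ψ (D ω) ∂P)) := by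
    refine tendsto_integral_of_dominated_convergence (fun ω => C * |ψ (D ω)|)
      (fun n => ((hg.measurable.comp (hXm n)).aestronglyMeasurable.mul hpsi.aestronglyMeasurable))
      (hpsi.abs.const_mul C) (fun n => ae_of_all _ fun ω => ?_) ?_
    · rw [norm_mul]
      exact mul_le_mul_of_nonneg_right (hC _) (norm_nonneg _)
    · filter_upwards [hlim] with ω hω
      exact ((hg.tendsto _).comp hω).mul_const _
  have l2 : Tendsto (fun n => ∫ ω, g (X n ω) ∂P) atTop (𝓝 (∫ ω, g (θ ω t) ∂P)) := by
    refine tendsto_integral_of_dominated_convergence (fun ω => C)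
      (fun n => ((hg.measurable.comp (hXm n)).aestronglyMeasurable))
      (integrable_const C) (fun n => ae_of_all _ fun ω => hC _) ?_
    filter_upwards [hlim] with ω hω
    exact (hg.tendsto _).comp hω
  refine tendsto_nhds_unique l1 ?_
  simp_rw [heqn]
  exact l2.mul_const _

/-- The frozen-label system with all processes extended continuously to the real line. -/
structure Sys {Ω : Type*} [MeasurableSpace Ω] (T : ℝ) (P : Measure Ω) (b : ℝ → Torus → ℝ)
    (K M : ℝ) (θ0 : Ω → Torus) (B : Ω → ℝ → ℝ) (θ : Ω → ℝ → Torus) : Prop where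
  hb : Continuous (Function.uncurry b)
  hK0 : 0 ≤ K
  hK : ∀ s u v, |b s u - b s v| ≤ K * dist u v
  hM : ∀ s u, |b s u| ≤ M
  hθ0 : Measurable θ0
  hBc : ∀ ω, Continuous (B ω)
  hBm : ∀ s, Measurable (fun ω => B ω s)
  hθc : ∀ ω, Continuous (θ ω)
  hθm : ∀ s, Measurable (fun ω => θ ω s)
  heq : ∀ᵐ ω ∂P, ∀ s ∈ Icc 0 T,
      θ ω s = θ0 ω + (((∫ r in (0:ℝ)..s, b r (θ ω r)) + B ω s : ℝ) : Torus)
  hind : IndepFun θ0 B P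
  hBM : ∀ s t : ℝ, 0 ≤ s → s ≤ t → t ≤ T →
    P.map (fun ω => B ω t - B ω s) = ProbabilityTheory.gaussianReal 0 (Real.toNNReal (t - s)) ∧
    ProbabilityTheory.IndepFun (fun ω => B ω t - B ω s)
      (fun ω => (fun r : Set.Icc (0:ℝ) s => B ω r)) P

lemma alg_bound {R y1 y2 A D h β C1 C2 M ε C : ℝ} (hε : 0 < ε) (hC : 0 ≤ C)
    (hR : |R| ≤ (ε + C * (A + D) ^ 2) * (A + D) ^ 2) (h1 : |y1| ≤ C1) (h2 : |y2| ≤ C2)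
    (hA : |A| ≤ M * h) :
    |R + y1 * (A - h * β) + (1/2) * y2 * (A ^ 2 + 2 * A * D)| ≤
      C1 * |A - h * β| + (C2 * M ^ 2 + C2 ^ 2 * M ^ 2 / ε + 2 * ε * M ^ 2) * h ^ 2
      + 8 * C * M ^ 4 * h ^ 4 + 3 * ε * D ^ 2 + 8 * C * D ^ 4 := by
  have hC2 : 0 ≤ C2 := (abs_nonneg _).trans h2
  have hA2 : A ^ 2 ≤ M ^ 2 * h ^ 2 := by
    rw [← sq_abs A, ← mul_pow]; gcongr
  have hA4 : A ^ 4 ≤ M ^ 4 * h ^ 4 := by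
    have : (A ^ 2) ^ 2 ≤ (M ^ 2 * h ^ 2) ^ 2 := by gcongr
    nlinarith [this]
  have z2 : (A + D) ^ 2 ≤ 2 * A ^ 2 + 2 * D ^ 2 := by nlinarith [sq_nonneg (A - D)]
  have z4 : ((A + D) ^ 2) ^ 2 ≤ 8 * A ^ 4 + 8 * D ^ 4 := by
    have : ((A + D) ^ 2) ^ 2 ≤ (2 * A ^ 2 + 2 * D ^ 2) ^ 2 := by gcongr
    nlinarith [sq_nonneg (A ^ 2 - D ^ 2)]
  have r1 : |R| ≤ ε * (2 * (M ^ 2 * h ^ 2) + 2 * D ^ 2) + C * (8 * (M ^ 4 * h ^ 4) + 8 * D ^ 4) := by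
    have e : (ε + C * (A + D) ^ 2) * (A + D) ^ 2 = ε * (A + D) ^ 2 + C * ((A + D) ^ 2) ^ 2 := by ring
    rw [e] at hR
    refine hR.trans ?_
    gcongr <;> linarith
  have r2 : |y1 * (A - h * β)| ≤ C1 * |A - h * β| := by
    rw [abs_mul]; gcongr
  have r3 : |(1/2) * y2 * (A ^ 2 + 2 * A * D)| ≤
      C2 * M ^ 2 * h ^ 2 + (C2 ^ 2 * M ^ 2 / ε * h ^ 2 + ε * D ^ 2) := by
    have a1 : |(1/2) * y2 * (A ^ 2 + 2 * A * D)| ≤ (1/2) * C2 * (A ^ 2 + 2 * (|A| * |D|)) := by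
      rw [abs_mul, abs_mul, abs_of_pos (by norm_num : (0:ℝ) < 1/2)]
      have : |A ^ 2 + 2 * A * D| ≤ A ^ 2 + 2 * (|A| * |D|) := by
        refine (abs_add_le _ _).trans ?_
        rw [abs_mul, abs_mul, abs_of_nonneg (sq_nonneg A), abs_of_pos (by norm_num : (0:ℝ) < 2)]
        linarith
      gcongr
    have a2 : C2 * (|A| * |D|) ≤ C2 ^ 2 * M ^ 2 / ε * h ^ 2 + ε * D ^ 2 := by
      have q : C2 ^ 2 * |A| ^ 2 / ε ≤ C2 ^ 2 * M ^ 2 / ε * h ^ 2 := by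
        rw [sq_abs, div_mul_eq_mul_div]
        have : C2 ^ 2 * A ^ 2 ≤ C2 ^ 2 * M ^ 2 * h ^ 2 := by
          rw [mul_assoc]; gcongr
        gcongr
      have q2 : C2 * (|A| * |D|) ≤ C2 ^ 2 * |A| ^ 2 / ε + ε * |D| ^ 2 := by
        rw [← sub_nonneg]
        have : C2 ^ 2 * |A| ^ 2 / ε + ε * |D| ^ 2 - C2 * (|A| * |D|) =
          ((C2 * |A| - (1/2) * ε * |D|) ^ 2 + (3/4) * ε ^ 2 * |D| ^ 2) / ε := by
          field_simp; ring
        rw [this]; positivity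
      rw [sq_abs D] at q2
      linarith
    have a3 : C2 * A ^ 2 ≤ C2 * M ^ 2 * h ^ 2 := by
      rw [mul_assoc]; gcongr
    have a4 : 0 ≤ C2 * A ^ 2 := by positivity
    nlinarith
  have t1 := abs_add_le (R + y1 * (A - h * β)) ((1/2) * y2 * (A ^ 2 + 2 * A * D))
  have t2 := abs_add_le R (y1 * (A - h * β))
  nlinarith

section
variable {Ω : Type*} [MeasurableSpace Ω] {T : ℝ} {P : Measure Ω} [IsProbabilityMeasure P]
  {b : ℝ → Torus → ℝ} {K M : ℝ} {θ0 : Ω → Torus} {B : Ω → ℝ → ℝ} {θ : Ω → ℝ → Torus}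

lemma Sys.cbθ (S : Sys T P b K M θ0 B θ) (ω : Ω) : Continuous (fun r => b r (θ ω r)) :=
  S.hb.comp (continuous_id.prodMk (S.hθc ω))

lemma Sys.cb (S : Sys T P b K M θ0 B θ) (r : ℝ) : Continuous (b r) :=
  S.hb.comp (continuous_const.prodMk continuous_id)

lemma Sys.intg (S : Sys T P b K M θ0 B θ) {g : Torus → ℝ} (hg : Continuous g) (t : ℝ) :
    Integrable (fun ω => g (θ ω t)) P := by
  obtain ⟨C, _, hC⟩ := torus_bdd hg
  exact Integrable.of_bound (hg.measurable.comp (S.hθm t)).aestronglyMeasurable C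
    (ae_of_all _ fun ω => hC _)

lemma Sys.q_tendsto (S : Sys T P b K M θ0 B θ) (t : ℝ) :
    Tendsto (fun s => ∫ ω, |(s - t)⁻¹ * (∫ r in t..s, b r (θ ω r)) - b t (θ ω t)| ∂P)
      (𝓝[>] t) (𝓝 0) := by
  have hM0 : 0 ≤ M := (abs_nonneg _).trans (S.hM 0 0)
  have := tendsto_integral_filter_of_dominated_convergence (μ := P) (l := 𝓝[>] t)
    (F := fun s ω => |(s - t)⁻¹ * (∫ r in t..s, b r (θ ω r)) - b t (θ ω t)|)
    (f := fun _ => (0:ℝ)) (fun _ => M + M) ?_ ?_ (integrable_const _) ?_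
  · simpa using this
  · refine Eventually.of_forall fun s => Measurable.aestronglyMeasurable ?_
    have h1 := meas_intervalIntegral b S.hb θ S.hθc S.hθm t s
    have h2 := (S.cb t).measurable.comp (S.hθm t)
    exact ((h1.const_mul _).sub h2).abs
  · filter_upwards [self_mem_nhdsWithin] with s hs
    refine ae_of_all _ fun ω => ?_
    have hs' : 0 < s - t := sub_pos.2 hs
    have h1 : ‖∫ r in t..s, b r (θ ω r)‖ ≤ M * |s - t| :=
      intervalIntegral.norm_integral_le_of_norm_le_const fun r _ => S.hM _ _
    rw [Real.norm_eq_abs, abs_abs]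
    refine (abs_sub _ _).trans (add_le_add ?_ (S.hM _ _))
    rw [abs_mul, abs_inv, inv_mul_le_iff₀ (abs_pos.2 hs'.ne'), mul_comm]
    exact h1
  · refine ae_of_all _ fun ω => ?_
    have hd := ((S.cbθ ω).integral_hasStrictDerivAt t t).hasDerivAt.hasDerivWithinAt (s := Ioi t)
    rw [hasDerivWithinAt_iff_tendsto_slope' (by simp)] at hd
    have h2 := (hd.sub_const (b t (θ ω t))).abs
    simp only [sub_self, abs_zero] at h2
    refine h2.congr fun s => ?_
    simp [slope_def_field, div_eq_inv_mul]

lemma Sys.step (S : Sys T P b K M θ0 B θ) (f f' f'' : Torus → ℝ) (hf'' : Continuous f'')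
    (h1 : ∀ r : ℝ, HasDerivAt (fun s : ℝ => f (s : Torus)) (f' (r : Torus)) r)
    (h2 : ∀ r : ℝ, HasDerivAt (fun s : ℝ => f' (s : Torus)) (f'' (r : Torus)) r)
    (hf : Continuous f) (hf' : Continuous f') {C1 : ℝ} (hC1 : ∀ u, |f' u| ≤ C1)
    {ε : ℝ} (hε : 0 < ε) (t : ℝ) (ht : 0 ≤ t) :
    ∃ L : ℝ, ∀ s, t < s → s ≤ T → s ≤ t + 1 →
      |(∫ ω, f (θ ω s) ∂P) - (∫ ω, f (θ ω t) ∂P) -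
        (s - t) * ∫ ω, ((1/2) * f'' (θ ω t) + f' (θ ω t) * b t (θ ω t)) ∂P| ≤
      C1 * (s - t) * (∫ ω, |(s - t)⁻¹ * (∫ r in t..s, b r (θ ω r)) - b t (θ ω t)| ∂P)
      + 3 * ε * (s - t) + L * (s - t) ^ 2 := by
  obtain ⟨C, hC0, hmod⟩ := torus_modulus hf'' hε
  obtain ⟨C2, hC20, hC2⟩ := torus_bdd hf''
  obtain ⟨m, hm0, hmom⟩ := gauss_moments
  have hM0 : 0 ≤ M := (abs_nonneg _).trans (S.hM 0 0)
  refine ⟨(C2 * M ^ 2 + C2 ^ 2 * M ^ 2 / ε + 2 * ε * M ^ 2) + 8 * C * M ^ 4 + 8 * C * m, ?_⟩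
  intro s hts hsT hs1
  set h := s - t with hh
  have hpos : 0 < h := sub_pos.2 hts
  have hle1 : h ≤ 1 := by linarith
  set D : Ω → ℝ := fun ω => B ω s - B ω t with hD
  set A : Ω → ℝ := fun ω => ∫ r in t..s, b r (θ ω r) with hA
  have hDm : Measurable D := (S.hBm s).sub (S.hBm t)
  have hAm : Measurable A := meas_intervalIntegral b S.hb θ S.hθc S.hθm t s
  obtain ⟨hlaw, hindD⟩ := S.hBM t s ht hts.le hsT
  obtain ⟨i1, i2, i4, e1, e2, e4⟩ := hmom h hpos.le
  rw [← hlaw] at i1 i2 i4 e1 e2 e4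
  replace i1 : Integrable (fun ω => D ω) P := i1.comp_measurable hDm
  replace i2 : Integrable (fun ω => D ω ^ 2) P := i2.comp_measurable hDm
  replace i4 : Integrable (fun ω => D ω ^ 4) P := i4.comp_measurable hDm
  rw [integral_map hDm.aemeasurable (by fun_prop)] at e1 e2 e4
  have heqt : ∀ᵐ ω ∂P, ∀ r ∈ Icc 0 t,
      θ ω r = θ0 ω + (((∫ r in (0:ℝ)..r, b r (θ ω r)) + B ω r : ℝ) : Torus) := by
    filter_upwards [S.heq] with ω hω r hr using hω r ⟨hr.1, by linarith [hr.2]⟩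
  have hind' : IndepFun θ0 (fun ω => (B ω, D ω)) P :=
    S.hind.comp (φ := id) (ψ := fun p : ℝ → ℝ => (p, p s - p t)) measurable_id (by fun_prop)
  have I1 : ∫ ω, f' (θ ω t) * D ω ∂P = 0 := by
    rw [indep_integral P b S.hb K S.hK0 S.hK θ0 S.hθ0 B S.hBc S.hBm θ S.hθc t ht heqt D hDm hind'
      hindD f' hf' (fun x => x) measurable_id i1, e1, mul_zero]
  have I2 : ∫ ω, f'' (θ ω t) * D ω ^ 2 ∂P = (∫ ω, f'' (θ ω t) ∂P) * h := by
    rw [indep_integral P b S.hb K S.hK0 S.hK θ0 S.hθ0 B S.hBc S.hBm θ S.hθc t ht heqt D hDm hind'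
      hindD f'' hf'' (fun x => x ^ 2) (by fun_prop) i2, e2]
  have hAb : ∀ ω, |A ω| ≤ M * h := fun ω => by
    have : ‖∫ r in t..s, b r (θ ω r)‖ ≤ M * |s - t| :=
      intervalIntegral.norm_integral_le_of_norm_le_const fun r _ => S.hM _ _
    rwa [abs_of_pos hpos] at this
  have hinc : ∀ᵐ ω ∂P, θ ω s = θ ω t + ((A ω + D ω : ℝ) : Torus) := by
    filter_upwards [S.heq] with ω hω
    rw [hω s ⟨ht.trans hts.le, hsT⟩, hω t ⟨ht, hts.le.trans hsT⟩, add_assoc, ← AddCircle.coe_add]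
    congr 2
    have : (∫ r in (0:ℝ)..t, b r (θ ω r)) + A ω = ∫ r in (0:ℝ)..s, b r (θ ω r) :=
      intervalIntegral.integral_add_adjacent_intervals ((S.cbθ ω).intervalIntegrable _ _)
        ((S.cbθ ω).intervalIntegrable _ _)
    rw [← this]; simp only [hD]; ring
  -- integrability
  have J0 := S.intg hf s
  have J1 := S.intg hf t
  have J2 := S.intg hf'' t
  have J3 : Integrable (fun ω => f' (θ ω t) * b t (θ ω t)) P := S.intg (hf'.mul (S.cb t)) t
  have J4 : Integrable (fun ω => f' (θ ω t) * D ω) P :=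
    i1.bdd_mul (c := C1) (hf'.measurable.comp (S.hθm t)).aestronglyMeasurable
      (ae_of_all _ fun ω => hC1 _)
  have J5 : Integrable (fun ω => f'' (θ ω t) * D ω ^ 2) P :=
    i2.bdd_mul (c := C2) (hf''.measurable.comp (S.hθm t)).aestronglyMeasurable
      (ae_of_all _ fun ω => hC2 _)
  have J6 : Integrable (fun ω => |h⁻¹ * A ω - b t (θ ω t)|) P := by
    refine Integrable.abs (Integrable.sub (Integrable.const_mul ?_ _) (S.intg (S.cb t) t))
    exact Integrable.of_bound hAm.aestronglyMeasurable (M * h) (ae_of_all _ hAb)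
  have main : (∫ ω, f (θ ω s) ∂P) - (∫ ω, f (θ ω t) ∂P) -
        h * ∫ ω, ((1/2) * f'' (θ ω t) + f' (θ ω t) * b t (θ ω t)) ∂P =
      ∫ ω, (f (θ ω s) - f (θ ω t) - f' (θ ω t) * D ω - (1/2) * (f'' (θ ω t) * D ω ^ 2)
        - h * (f' (θ ω t) * b t (θ ω t))) ∂P := by
    have k1 : Integrable (fun ω => f (θ ω s) - f (θ ω t)) P := J0.sub J1
    have k2 : Integrable (fun ω => f (θ ω s) - f (θ ω t) - f' (θ ω t) * D ω) P := k1.sub J4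
    have k3 : Integrable (fun ω => f (θ ω s) - f (θ ω t) - f' (θ ω t) * D ω
      - (1/2) * (f'' (θ ω t) * D ω ^ 2)) P := k2.sub (J5.const_mul _)
    rw [integral_sub k3 (J3.const_mul _),
      integral_sub k2 (J5.const_mul _), integral_sub k1 J4,
      integral_sub J0 J1, integral_const_mul, integral_const_mul, I1, I2,
      integral_add (J2.const_mul _) J3, integral_const_mul]
    ring
  rw [main]
  set L0 := (C2 * M ^ 2 + C2 ^ 2 * M ^ 2 / ε + 2 * ε * M ^ 2) * h ^ 2 + 8 * C * M ^ 4 * h ^ 4 with hL0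
  have JB : Integrable (fun ω => C1 * h * |h⁻¹ * A ω - b t (θ ω t)| + L0 + 3 * ε * D ω ^ 2
      + 8 * C * D ω ^ 4) P :=
    (((J6.const_mul (C1 * h)).add (integrable_const L0)).add (i2.const_mul (3 * ε))).add (i4.const_mul (8 * C))
  rw [← Real.norm_eq_abs (∫ ω, (_ - h * (f' (θ ω t) * b t (θ ω t))) ∂P)]
  refine (norm_integral_le_of_norm_le JB ?_).trans ?_
  · filter_upwards [hinc] with ω hω
    have hT := taylor_bound f f' f'' h1 h2 hC0 hmod (θ ω t) (A ω + D ω)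
    rw [← hω] at hT
    have := alg_bound (β := b t (θ ω t)) hε hC0 hT (hC1 (θ ω t)) (hC2 (θ ω t)) (hAb ω)
    have e : f (θ ω s) - f (θ ω t) - f' (θ ω t) * D ω - (1/2) * (f'' (θ ω t) * D ω ^ 2)
        - h * (f' (θ ω t) * b t (θ ω t)) = f (θ ω s) - f (θ ω t) - f' (θ ω t) * (A ω + D ω)
        - 1 / 2 * f'' (θ ω t) * (A ω + D ω) ^ 2 + f' (θ ω t) * (A ω - h * b t (θ ω t)) +
        1 / 2 * f'' (θ ω t) * (A ω ^ 2 + 2 * A ω * D ω) := by ring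
    rw [Real.norm_eq_abs, e]
    refine this.trans (le_of_eq ?_)
    have e' : |A ω - h * b t (θ ω t)| = h * |h⁻¹ * A ω - b t (θ ω t)| := by
      rw [← abs_of_pos hpos, ← abs_mul, abs_of_pos hpos, mul_sub, mul_inv_cancel_left₀ hpos.ne']
    rw [e', hL0]; ring
  · have : ∫ ω, (C1 * h * |h⁻¹ * A ω - b t (θ ω t)| + L0 + 3 * ε * D ω ^ 2 + 8 * C * D ω ^ 4) ∂P =
        C1 * h * (∫ ω, |h⁻¹ * A ω - b t (θ ω t)| ∂P) + L0 + 3 * ε * h + 8 * C * (m * h ^ 2) := by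
      have k1 : Integrable (fun ω => C1 * h * |h⁻¹ * A ω - b t (θ ω t)| + L0) P :=
        (J6.const_mul (C1 * h)).add (integrable_const L0)
      have k2 : Integrable (fun ω => C1 * h * |h⁻¹ * A ω - b t (θ ω t)| + L0 + 3 * ε * D ω ^ 2) P :=
        k1.add (i2.const_mul (3 * ε))
      rw [integral_add k2 (i4.const_mul (8 * C)), integral_add k1
        (i2.const_mul (3 * ε)), integral_add (J6.const_mul (C1 * h)) (integrable_const L0),
        integral_const_mul, integral_const_mul, integral_const_mul, e2, e4]
      simp
    rw [this, hL0]
    have : h ^ 4 ≤ h ^ 2 := pow_le_pow_of_le_one hpos.le hle1 (by norm_num)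
    have : 8 * C * M ^ 4 * h ^ 4 ≤ 8 * C * M ^ 4 * h ^ 2 := by gcongr
    nlinarith

lemma Sys.gcont (S : Sys T P b K M θ0 B θ) (G : ℝ → Torus → ℝ)
    (hG : Continuous (Function.uncurry G)) {C : ℝ} (hC : ∀ s u, |G s u| ≤ C) :
    Continuous (fun t => ∫ ω, G t (θ ω t) ∂P) := by
  refine continuous_of_dominated (bound := fun _ => C) (fun t => ?_) (fun t => ae_of_all _ fun ω => hC _ _)
    (integrable_const _) (ae_of_all _ fun ω => hG.comp (continuous_id.prodMk (S.hθc ω)))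
  have : Continuous (G t) := hG.comp (continuous_const.prodMk continuous_id)
  exact (this.measurable.comp (S.hθm t)).aestronglyMeasurable

theorem Sys.fokker_planck (S : Sys T P b K M θ0 B θ) (f f' f'' : Torus → ℝ) (hf'' : Continuous f'')
    (h1 : ∀ r : ℝ, HasDerivAt (fun s : ℝ => f (s : Torus)) (f' (r : Torus)) r)
    (h2 : ∀ r : ℝ, HasDerivAt (fun s : ℝ => f' (s : Torus)) (f'' (r : Torus)) r)
    (t : ℝ) (ht : t ∈ Icc 0 T) :
    (∫ ω, f (θ ω t) ∂P) - (∫ ω, f (θ ω 0) ∂P) =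
      ∫ s in (0:ℝ)..t, ∫ ω, ((1/2) * f'' (θ ω s) + f' (θ ω s) * b s (θ ω s)) ∂P := by
  have hf : Continuous f := torus_cont_of_lift
    (continuous_iff_continuousAt.2 fun r => (h1 r).continuousAt)
  have hf' : Continuous f' := torus_cont_of_lift
    (continuous_iff_continuousAt.2 fun r => (h2 r).continuousAt)
  obtain ⟨C0, _, hC0⟩ := torus_bdd hf
  obtain ⟨C1, hC10, hC1⟩ := torus_bdd hf'
  obtain ⟨C2, _, hC2⟩ := torus_bdd hf''
  have cφ : Continuous (fun t => ∫ ω, f (θ ω t) ∂P) :=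
    S.gcont (fun _ => f) (hf.comp continuous_snd) (fun _ => hC0)
  have cg : Continuous (fun s => ∫ ω, ((1/2) * f'' (θ ω s) + f' (θ ω s) * b s (θ ω s)) ∂P) := by
    refine S.gcont (C := (1/2) * C2 + C1 * M) (fun s u => (1/2) * f'' u + f' u * b s u) ?_ ?_
    · have := S.hb
      simp only [Function.uncurry_def] at this ⊢
      fun_prop
    · intro s u
      refine (abs_add_le _ _).trans ?_
      rw [abs_mul, abs_mul, abs_of_pos (by norm_num : (0:ℝ) < 1/2)]
      have := hC1 u; have := hC2 u; have := S.hM s u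
      gcongr
  symm
  refine intervalIntegral.integral_eq_sub_of_hasDeriv_right
    (f := fun t => ∫ ω, f (θ ω t) ∂P) cφ.continuousOn ?_ (cg.intervalIntegrable _ _)
  intro x hx
  rw [min_eq_left ht.1, max_eq_right ht.1] at hx
  rw [hasDerivWithinAt_iff_tendsto_slope' (by simp), Metric.tendsto_nhds]
  intro ε hε
  obtain ⟨L, hL⟩ := S.step f f' f'' hf'' h1 h2 hf hf' hC1 (ε := ε / 6) (by positivity) x hx.1.le
  have hq := (S.q_tendsto x).const_mul C1
  have hLt : Tendsto (fun s => L * (s - x)) (𝓝[>] x) (𝓝 0) := by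
    have : Continuous (fun s => L * (s - x)) := by fun_prop
    simpa using (this.tendsto x).mono_left nhdsWithin_le_nhds
  have hsum := hq.add hLt
  rw [mul_zero, zero_add] at hsum
  have hev := hsum.eventually (gt_mem_nhds (show (0:ℝ) < ε / 2 by positivity))
  have hIoo : ∀ᶠ s in 𝓝[>] x, s ∈ Ioo x (min T (x + 1)) :=
    Ioo_mem_nhdsGT (lt_min (hx.2.trans_le ht.2) (by linarith))
  filter_upwards [hev, hIoo] with s hs hsI
  have hp : 0 < s - x := sub_pos.2 hsI.1
  have hb := hL s hsI.1 (hsI.2.le.trans (min_le_left _ _)) (hsI.2.le.trans (min_le_right _ _))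
  rw [Real.dist_eq, slope_def_field]
  have e : ((∫ ω, f (θ ω s) ∂P) - (∫ ω, f (θ ω x) ∂P)) / (s - x)
      - (∫ ω, ((1/2) * f'' (θ ω x) + f' (θ ω x) * b x (θ ω x)) ∂P) =
      ((∫ ω, f (θ ω s) ∂P) - (∫ ω, f (θ ω x) ∂P) -
        (s - x) * ∫ ω, ((1/2) * f'' (θ ω x) + f' (θ ω x) * b x (θ ω x)) ∂P) / (s - x) := by
    field_simp
  rw [e, abs_div, abs_of_pos hp, div_lt_iff₀ hp]
  refine hb.trans_lt ?_
  have := mul_lt_mul_of_pos_right hs hp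
  nlinarith

end
/-- labeled nonlinear Fokker–Planck equation: if `θ` solves the nonlinear
system for `W` where for a.e. `x` the driver `B^x` is a standard Brownian motion independent
of `θ^x_0`, then for a.e. `x ∈ I` the marginal laws `μ^x_t = Law(θ^x_t)` solve the labeled
nonlinear Fokker–Planck equation weakly: for every `C²` function `f : 𝕋 → ℝ` and every
`t ∈ [0,T]`,
`∫ f dμ^x_t − ∫ f dμ^x_0
  = ∫₀ᵗ ∫ ( ½ f'' + f' · (F + ∫_I W(x,y) ∫ Γ(·,u) μ^y_s(du) dy) ) dμ^x_s ds`. -/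
theorem labeled_nonlinear_fokker_planck
    {Ω : Type*} [MeasurableSpace Ω] (T : ℝ) (hT : 0 < T)
    (P : Measure Ω) [IsProbabilityMeasure P]
    (F : Torus → ℝ) (Γ : Torus → Torus → ℝ) (hF : BddLip F) (hΓ : BddLip2 Γ)
    (W : ℝ → ℝ → ℝ) (hW : IsGraphon W)
    (θ0 : ℝ → Ω → Torus) (hθ0 : Measurable (fun p : ℝ × Ω => θ0 p.1 p.2))
    (B : ℝ → Ω → ℝ → ℝ) (hBmeas : Measurable (fun p : ℝ × Ω => B p.1 p.2))
    (hBM : ∀ᵐ x ∂(volume.restrict I01), IsStandardBM T P (B x) ∧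
      ProbabilityTheory.IndepFun (θ0 x) (fun ω => B x ω) P)
    (θ : ℝ → Ω → ℝ → Torus)
    (hθ : IsLabeledSolution T P F Γ W θ0 B θ) :
    ∀ᵐ x ∂(volume.restrict I01),
      ∀ (f f' f'' : Torus → ℝ), Continuous f'' →
        (∀ r : ℝ, HasDerivAt (fun s : ℝ => f (s : Torus)) (f' (r : Torus)) r) →
        (∀ r : ℝ, HasDerivAt (fun s : ℝ => f' (s : Torus)) (f'' (r : Torus)) r) →
        ∀ t ∈ Set.Icc (0:ℝ) T,
          (∫ u, f u ∂(pathLaw P (θ x) t)) - (∫ u, f u ∂(pathLaw P (θ x) 0)) =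
            ∫ s in Set.Icc (0:ℝ) t, ∫ u,
              ((1/2) * f'' u + f' u *
                (F u + ∫ y in I01, W x y * ∫ v, Γ u v ∂(pathLaw P (θ y) s)))
              ∂(pathLaw P (θ x) s) := by
  obtain ⟨⟨KF, hKF⟩, MF, hMF⟩ := hF
  obtain ⟨⟨KG, hKG⟩, MG, hMG⟩ := hΓ
  obtain ⟨hWm, hW01, -⟩ := hW
  have hθm : ∀ s, Measurable (fun p : ℝ × Ω => θ p.1 p.2 s) :=
    fun s => (measurable_pi_apply s).comp hθ.jointMeas
  have hθym : ∀ y s, Measurable (fun ω => θ y ω s) :=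
    fun y s => (hθm s).comp measurable_prodMk_left
  have hGc : Continuous (fun p : Torus × Torus => Γ p.1 p.2) := hKG.continuous
  have hGu : ∀ u, Continuous (Γ u) := fun u => hGc.comp (continuous_const.prodMk continuous_id)
  have hlaw : ∀ y s (g : Torus → ℝ), Continuous g →
      ∫ v, g v ∂(pathLaw P (θ y) s) = ∫ ω, g (θ y ω s) ∂P := by
    intro y s g hg
    exact integral_map (hθym y s).aemeasurable hg.aestronglyMeasurable
  set c : ℝ → ℝ := fun s => projIcc 0 T hT.le s with hc
  have hcc : Continuous c := continuous_subtype_val.comp continuous_projIcc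
  have hcmem : ∀ s, c s ∈ Icc 0 T := fun s => (projIcc 0 T hT.le s).2
  have hcid : ∀ s ∈ Icc 0 T, c s = s := fun s hs => by simp only [hc, projIcc_of_mem hT.le hs]
  have hθcont : ∀ y ω, Continuous (fun s => θ y ω (c s)) := fun y ω =>
    (hθ.cont y ω).comp_continuous hcc hcmem
  have hMG0 : 0 ≤ MG := (abs_nonneg _).trans (hMG 0 0)
  -- inner expectation
  set J : ℝ → ℝ → Torus → ℝ := fun y s u => ∫ ω, Γ u (θ y ω (c s)) ∂P with hJ
  have hJb : ∀ y s u, |J y s u| ≤ MG := by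
    intro y s u
    have := norm_integral_le_of_norm_le_const (μ := P) (f := fun ω => Γ u (θ y ω (c s))) (C := MG)
      (ae_of_all _ fun ω => hMG _ _)
    simpa using this
  have hJc : ∀ y, Continuous (fun q : ℝ × Torus => J y q.1 q.2) := by
    intro y
    refine continuous_of_dominated (bound := fun _ => MG) (fun q => ?_)
      (fun q => ae_of_all _ fun ω => hMG _ _) (integrable_const _) (ae_of_all _ fun ω => ?_)
    · exact ((hGu q.2).measurable.comp (hθym y (c q.1))).aestronglyMeasurable
    · exact hGc.comp (continuous_snd.prodMk ((hθcont y ω).comp continuous_fst))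
  have hJm : ∀ s u, Measurable (fun y => J y s u) := by
    intro s u
    have : Measurable (fun p : ℝ × Ω => Γ u (θ p.1 p.2 (c s))) :=
      (hGu u).measurable.comp (hθm (c s))
    exact (this.stronglyMeasurable.integral_prod_right (ν := P)).measurable
  have hJL : ∀ y s u v, |J y s u - J y s v| ≤ KG * dist u v := by
    intro y s u v
    have i : ∀ u, Integrable (fun ω => Γ u (θ y ω (c s))) P := fun u =>
      Integrable.of_bound ((hGu u).measurable.comp (hθym y (c s))).aestronglyMeasurable MG
        (ae_of_all _ fun ω => hMG _ _)
    have e : J y s u - J y s v = ∫ ω, (Γ u (θ y ω (c s)) - Γ v (θ y ω (c s))) ∂P :=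
      (integral_sub (i u) (i v)).symm
    rw [e]
    have := norm_integral_le_of_norm_le_const (μ := P)
      (f := fun ω => Γ u (θ y ω (c s)) - Γ v (θ y ω (c s))) (C := KG * dist u v)
      (ae_of_all _ fun ω => by
        have := hKG.dist_le_mul (u, θ y ω (c s)) (v, θ y ω (c s))
        simpa [Prod.dist_eq, Real.dist_eq] using this)
    simpa using this
  filter_upwards [hBM, hθ.sde] with x hx hsde
  obtain ⟨⟨hB0, hBc, hBm, hBinc⟩, hBind⟩ := hx
  have hWy : Measurable (fun y => W x y) := hWm.comp measurable_prodMk_left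
  have hWb : ∀ y, |W x y| ≤ 1 := fun y => abs_le.2 ⟨by linarith [(hW01 x y).1], (hW01 x y).2⟩
  have hWJb : ∀ y s u, |W x y * J y s u| ≤ MG := by
    intro y s u
    rw [abs_mul]
    have h1 := mul_le_mul (hWb y) (hJb y s u) (abs_nonneg _) zero_le_one
    linarith
  have hWJm : ∀ s u, Measurable (fun y => W x y * J y s u) := fun s u => hWy.mul (hJm s u)
  have hvol : (volume.restrict I01).real univ = 1 := by simp [I01]
  have hWJi : ∀ s u, Integrable (fun y => W x y * J y s u) (volume.restrict I01) := fun s u =>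
    Integrable.of_bound (hWJm s u).aestronglyMeasurable MG (ae_of_all _ fun y => hWJb y s u)
  set G : ℝ → Torus → ℝ := fun s u => ∫ y in I01, W x y * J y s u with hG
  have hGcont : Continuous (Function.uncurry G) := by
    refine continuous_of_dominated (bound := fun _ => MG) (fun q => ?_)
      (fun q => ae_of_all _ fun y => hWJb y q.1 q.2) (integrable_const _)
      (ae_of_all _ fun y => continuous_const.mul (hJc y))
    exact (hWJm q.1 q.2).aestronglyMeasurable
  have hGb : ∀ s u, |G s u| ≤ MG := by
    intro s u
    have := norm_integral_le_of_norm_le_const (μ := volume.restrict I01)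
      (f := fun y => W x y * J y s u) (C := MG) (ae_of_all _ fun y => hWJb y s u)
    rwa [hvol, mul_one] at this
  have hGL : ∀ s u v, |G s u - G s v| ≤ KG * dist u v := by
    intro s u v
    have e : G s u - G s v = ∫ y in I01, (W x y * J y s u - W x y * J y s v) :=
      (integral_sub (hWJi s u) (hWJi s v)).symm
    rw [e]
    have := norm_integral_le_of_norm_le_const (μ := volume.restrict I01)
      (f := fun y => W x y * J y s u - W x y * J y s v) (C := KG * dist u v)
      (ae_of_all _ fun y => by
        rw [← mul_sub, norm_mul]
        have h1 := mul_le_mul (hWb y) (hJL y s u v) (abs_nonneg _) zero_le_one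
        rw [one_mul] at h1
        exact h1)
    rwa [hvol, mul_one] at this
  have hGeq : ∀ s ∈ Icc 0 T, ∀ u,
      (∫ y in I01, W x y * ∫ v, Γ u v ∂(pathLaw P (θ y) s)) = G s u := by
    intro s hs u
    simp only [hG, hJ, hcid s hs]
    congr 1
    ext y
    rw [hlaw y s (Γ u) (hGu u)]
  have S : Sys T P (fun s u => F u + G s u) (KF + KG) (MF + MG) (θ0 x)
      (fun ω s => B x ω (c s)) (fun ω s => θ x ω (c s)) := by
    refine ⟨?_, by positivity, ?_, ?_, ?_, ?_, fun s => hBm _, hθcont x, fun s => hθym x _, ?_, ?_, ?_⟩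
    · exact (hKF.continuous.comp continuous_snd).add hGcont
    · intro s u v
      have h1 := hKF.dist_le_mul u v
      rw [Real.dist_eq] at h1
      have h2 := hGL s u v
      have h3 := abs_add_le (F u - F v) (G s u - G s v)
      have e : F u + G s u - (F v + G s v) = F u - F v + (G s u - G s v) := by ring
      rw [e, add_mul]
      linarith
    · intro s u
      exact (abs_add_le _ _).trans (add_le_add (hMF u) (hGb s u))
    · exact hθ0.comp measurable_prodMk_left
    · exact fun ω => (hBc ω).comp_continuous hcc hcmem
    · filter_upwards [hsde] with ω hω s hs
      have h1 := hω s hs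
      rw [hcid s hs, h1]
      congr 3
      have cF : Continuous (fun r => F (θ x ω (c r))) := hKF.continuous.comp (hθcont x ω)
      have cG : Continuous (fun r => G r (θ x ω (c r))) :=
        hGcont.comp (continuous_id.prodMk (hθcont x ω))
      rw [intervalIntegral.integral_add (cF.intervalIntegrable _ _) (cG.intervalIntegrable _ _),
        intervalIntegral.integral_of_le hs.1, intervalIntegral.integral_of_le hs.1,
        ← integral_Icc_eq_integral_Ioc, ← integral_Icc_eq_integral_Ioc]
      unfold drift
      congr 1
      · refine setIntegral_congr_fun measurableSet_Icc fun r hr => ?_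
        simp only [hcid r ⟨hr.1, hr.2.trans hs.2⟩]
      · refine setIntegral_congr_fun measurableSet_Icc fun r hr => ?_
        have hr' : r ∈ Icc 0 T := ⟨hr.1, hr.2.trans hs.2⟩
        simp only [hcid r hr']
        exact hGeq r hr' _
    · exact hBind.comp (φ := id) (ψ := fun p : ℝ → ℝ => fun s => p (c s)) measurable_id
        (measurable_pi_lambda _ fun s => measurable_pi_apply _)
    · intro s t hs hst htT
      have h1 := hBinc s t hs hst htT
      rw [hcid s ⟨hs, hst.trans htT⟩, hcid t ⟨hs.trans hst, htT⟩]
      have e : (fun ω => (fun r : Set.Icc (0:ℝ) s => B x ω (c r))) =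
          (fun ω => (fun r : Set.Icc (0:ℝ) s => B x ω r)) := by
        ext ω r
        rw [hcid r ⟨r.2.1, r.2.2.trans (hst.trans htT)⟩]
      rw [e]
      exact h1
  intro f f' f'' hf'' h1 h2 t ht
  have hf : Continuous f := torus_cont_of_lift
    (continuous_iff_continuousAt.2 fun r => (h1 r).continuousAt)
  have hf' : Continuous f' := torus_cont_of_lift
    (continuous_iff_continuousAt.2 fun r => (h2 r).continuousAt)
  have key := S.fokker_planck f f' f'' hf'' h1 h2 t ht
  simp only [hcid t ht, hcid 0 ⟨le_rfl, hT.le⟩] at key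
  rw [hlaw x t f hf, hlaw x 0 f hf, key, intervalIntegral.integral_of_le ht.1,
    ← integral_Icc_eq_integral_Ioc]
  refine setIntegral_congr_fun measurableSet_Icc fun s hs => ?_
  have hs' : s ∈ Icc 0 T := ⟨hs.1, hs.2.trans ht.2⟩
  simp only [hcid s hs', hGeq s hs']
  symm
  refine hlaw x s (fun u => (1/2) * f'' u + f' u * (F u + G s u)) ?_
  have hGs : Continuous (G s) := hGcont.comp (continuous_const.prodMk continuous_id)
  have := hKF.continuous
  fun_prop
end
end
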